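/- Let n ≥ 1 be a natural number, let α ∈ (4n−3, 4n−1), set ν = (1−α)/2, and let λ satisfy 0 < λ < j_{ν,1}². Then for all real numbers r, s with 0 < r ≤ s ≤ 1, r^ν · (J_{−ν}(s·√λ)·J_ν(r·√λ) − J_ν(s·√λ)·J_{−ν}(r·√λ)) ≥ 0. -/

import Mathlib

/-!
The Bessel–Clifford function `C_μ(z) = ∑ z ^ m / (m! Γ(m + μ + 1))` is entire, satisfies
`C_μ' = C_{μ+1}` and `C_μ = (μ + 1) C_{μ+1} + z C_{μ+2}`, and `J_μ(x) = (x/2)^μ C_μ(-(x/2)²)`.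
These relations make `ν C_ν C_{-ν} + z (C_{ν+1} C_{-ν} - C_ν C_{1-ν})` constant in `z`; its value
at `z = 0` is `sin (πν) / π` by Euler's reflection formula, which is the classical Wronskian
`J_ν J_{-ν}' - J_ν' J_{-ν} = -2 sin (πν) / (π x)`. Hence, if `sin (πν) ≤ 0`, the quotient
`J_{-ν} / J_ν` is nondecreasing on each interval where `J_ν` has no zero. On such an interval `J_ν`
has constant sign, so clearing denominators preserves the inequality. The orders `ν = (1 - α) / 2`
with `α ∈ (4n - 3, 4n - 1)` fill the interval `(1 - 2n, 2 - 2n)`, on which `sin (πν) < 0`.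
-/

/-- The Bessel function of the first kind of real order `μ`. -/
noncomputable def besselJ (μ x : ℝ) : ℝ :=
  ∑' m : ℕ, ((-1 : ℝ) ^ m / ((m.factorial : ℝ) * Real.Gamma ((m : ℝ) + μ + 1))) *
    (x / 2) ^ (2 * (m : ℝ) + μ)

open Set Real

section Calculus

theorem hasDerivAt_tsum_mul_pow {𝕜 : Type*} [RCLike 𝕜] {a : ℕ → 𝕜} {R : ℝ} {z : 𝕜}
    (ha : Summable fun m : ℕ => ‖(m + 1) * a (m + 1)‖ * R ^ m) (hz : ‖z‖ < R) :
    HasDerivAt (fun w => ∑' m, a m * w ^ m) (∑' m : ℕ, (m + 1) * a (m + 1) * z ^ m) z := by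
  have bound_summable : Summable fun m : ℕ => ‖m * a m‖ * R ^ (m - 1) :=
    (summable_nat_add_iff 1).1 (by simpa using ha)
  have term_bound : ∀ (m : ℕ) (w : 𝕜), w ∈ Metric.ball 0 R →
      ‖m * a m * w ^ (m - 1)‖ ≤ ‖m * a m‖ * R ^ (m - 1) := by
    intro m w hw
    rw [norm_mul, norm_pow]
    gcongr
    exact (mem_ball_zero_iff.1 hw).le
  have hz_mem : z ∈ Metric.ball 0 R := mem_ball_zero_iff.2 hz
  have termwise : HasDerivAt (fun w => ∑' m, a m * w ^ m) (∑' m : ℕ, m * a m * z ^ (m - 1)) z :=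
    hasDerivAt_tsum_of_isPreconnected bound_summable Metric.isOpen_ball
      (convex_ball 0 R).isPreconnected
      (fun m w _ => ((hasDerivAt_pow m w).const_mul (a m)).congr_deriv (by ring)) term_bound
      (Metric.mem_ball_self ((norm_nonneg z).trans_lt hz))
      (summable_of_ne_finset_zero (s := {0}) fun m hm => by
        simp [Finset.notMem_singleton.1 hm]) hz_mem
  have deriv_summable : Summable fun m : ℕ => m * a m * z ^ (m - 1) :=
    .of_norm_bounded bound_summable fun m => term_bound m z hz_mem
  refine termwise.congr_deriv ?_
  simp [deriv_summable.tsum_eq_zero_add]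

theorem mul_pos_of_isPreconnected_of_ne_zero {X : Type*} [TopologicalSpace X] {s : Set X}
    {f : X → ℝ} (hs : IsPreconnected s) (hf : ContinuousOn f s) (hne : ∀ x ∈ s, f x ≠ 0)
    {a b : X} (ha : a ∈ s) (hb : b ∈ s) : 0 < f a * f b := by
  by_contra! hab
  have zero_between : (0 : ℝ) ∈ uIcc (f a) (f b) :=
    mem_uIcc.2 ((mul_nonpos_iff.1 hab).symm.imp_right And.symm)
  obtain ⟨x, hx, hfx⟩ := (hs.image f hf).ordConnected.uIcc_subset
    (mem_image_of_mem f ha) (mem_image_of_mem f hb) zero_between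
  exact hne x hx hfx

theorem mul_le_mul_of_wronskian_nonneg {f f' g g' : ℝ → ℝ} {a b : ℝ} (hab : a ≤ b)
    (hf : ∀ t ∈ Icc a b, HasDerivAt f (f' t) t) (hg : ∀ t ∈ Icc a b, HasDerivAt g (g' t) t)
    (hne : ∀ t ∈ Icc a b, f t ≠ 0) (hW : ∀ t ∈ Icc a b, 0 ≤ f t * g' t - f' t * g t) :
    f b * g a ≤ f a * g b := by
  have ha : a ∈ Icc a b := left_mem_Icc.2 hab
  have hb : b ∈ Icc a b := right_mem_Icc.2 hab
  have hquot : ∀ t ∈ Icc a b,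
      HasDerivAt (fun t => g t / f t) ((g' t * f t - g t * f' t) / f t ^ 2) t :=
    fun t ht => (hg t ht).div (hf t ht) (hne t ht)
  have quot_monotone : MonotoneOn (fun t => g t / f t) (Icc a b) := by
    refine monotoneOn_of_hasDerivWithinAt_nonneg (convex_Icc a b)
      (fun t ht => (hquot t ht).continuousAt.continuousWithinAt)
      (fun t ht => (hquot t (interior_subset ht)).hasDerivWithinAt)
      fun t ht => div_nonneg ?_ (sq_nonneg _)
    linarith [hW t (interior_subset ht)]
  have hpos : 0 < f a * f b := mul_pos_of_isPreconnected_of_ne_zero isPreconnected_Icc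
    (fun t ht => (hf t ht).continuousAt.continuousWithinAt) hne ha hb
  have hfa := hne a ha
  have hfb := hne b hb
  calc f b * g a = g a / f a * (f a * f b) := by field_simp
    _ ≤ g b / f b * (f a * f b) := mul_le_mul_of_nonneg_right (quot_monotone ha hb hab) hpos.le
    _ = f a * g b := by field_simp

end Calculus

section Gamma

-- At the poles of `Γ` both sides vanish because `Gamma` takes the junk value `0` there.
theorem inv_Gamma_eq_mul_inv_Gamma_add_one (s : ℝ) : (Gamma s)⁻¹ = s * (Gamma (s + 1))⁻¹ := by
  rcases eq_or_ne s 0 with rfl | hs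
  · simp
  · rw [Gamma_add_one hs, mul_inv, mul_inv_cancel_left₀ hs]

theorem mul_inv_Gamma_mul_inv_Gamma_neg (s : ℝ) :
    s * ((Gamma (s + 1))⁻¹ * (Gamma (-s + 1))⁻¹) = sin (π * s) / π := by
  rw [← mul_assoc, ← inv_Gamma_eq_mul_inv_Gamma_add_one, ← mul_inv, neg_add_eq_sub,
    Gamma_mul_Gamma_one_sub, inv_div]

end Gamma

/-- The Taylor coefficients at `0` of the Bessel–Clifford function of order `μ`. A coefficient
at a pole of `Γ` is `0`, since `Gamma` is `0` there. -/
noncomputable def besselCliffordCoeff (μ : ℝ) (m : ℕ) : ℝ :=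
  ((m.factorial : ℝ) * Gamma (m + μ + 1))⁻¹

/-- The Bessel–Clifford function `C_μ(z) = ∑ z ^ m / (m! Γ(m + μ + 1))`: the entire factor of the
Bessel functions of order `μ`. -/
noncomputable def besselClifford (μ z : ℝ) : ℝ :=
  ∑' m : ℕ, besselCliffordCoeff μ m * z ^ m

section BesselClifford

variable (μ z : ℝ)

theorem succ_mul_besselCliffordCoeff_succ (m : ℕ) :
    (m + 1) * besselCliffordCoeff μ (m + 1) = besselCliffordCoeff (μ + 1) m := by
  have hm : (m : ℝ) + 1 ≠ 0 := by positivity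
  have harg : (m : ℝ) + 1 + μ + 1 = m + (μ + 1) + 1 := by ring
  simp only [besselCliffordCoeff, Nat.factorial_succ, Nat.cast_mul, Nat.cast_succ, harg]
  field_simp

theorem besselCliffordCoeff_eq_mul (m : ℕ) :
    besselCliffordCoeff μ m = (m + μ + 1) * besselCliffordCoeff (μ + 1) m := by
  simp only [besselCliffordCoeff, mul_inv]
  rw [inv_Gamma_eq_mul_inv_Gamma_add_one, ← add_assoc (m : ℝ) μ 1]
  ring

-- `C_μ` is the regularized hypergeometric function `₀F₁(; μ + 1; ·)`, whose radius is infinite.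
theorem summable_norm_besselCliffordCoeff_mul_pow (R : NNReal) :
    Summable fun m => ‖besselCliffordCoeff μ m‖ * (R : ℝ) ^ m := by
  let p := Complex.regularizedHGFunSeries 0 {(μ : ℂ) + 1}
  have radius_eq_top : p.radius = ⊤ := Complex.radius_regularizedHGFunSeries_eq_top (by simp)
  have norm_coeff (m : ℕ) : ‖p m‖ = ‖besselCliffordCoeff μ m‖ := by
    have hcoeff : Complex.regularizedHGFunCoeff 0 {(μ : ℂ) + 1} m = besselCliffordCoeff μ m := by
      have harg : (μ : ℂ) + 1 + m = m + μ + 1 := by ring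
      simp [Complex.regularizedHGFunCoeff, besselCliffordCoeff, ← Complex.Gamma_ofReal, harg,
        mul_comm]
    rw [FormalMultilinearSeries.norm_apply_eq_norm_coef,
      Complex.regularizedHGFunSeries_coeff, hcoeff, Complex.norm_real]
  simpa only [norm_coeff] using p.summable_norm_mul_pow (r := R) (by simp [radius_eq_top])

theorem hasSum_besselClifford :
    HasSum (fun m => besselCliffordCoeff μ m * z ^ m) (besselClifford μ z) :=
  (Summable.of_norm (by
    simpa using summable_norm_besselCliffordCoeff_mul_pow μ ‖z‖₊)).hasSum

theorem hasDerivAt_besselClifford : HasDerivAt (besselClifford μ) (besselClifford (μ + 1) z) z := by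
  have hsum := summable_norm_besselCliffordCoeff_mul_pow (μ + 1) (‖z‖₊ + 1)
  simp only [← succ_mul_besselCliffordCoeff_succ] at hsum
  refine (hasDerivAt_tsum_mul_pow hsum (by simp)).congr_deriv ?_
  simp only [succ_mul_besselCliffordCoeff_succ, besselClifford]

theorem hasSum_mul_besselCliffordCoeff :
    HasSum (fun m : ℕ => m * besselCliffordCoeff μ m * z ^ m) (z * besselClifford (μ + 1) z) := by
  rw [← hasSum_nat_add_iff' 1]
  simp only [Finset.sum_range_one, Nat.cast_zero, zero_mul, sub_zero, Nat.cast_succ,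
    succ_mul_besselCliffordCoeff_succ, pow_succ]
  exact ((hasSum_besselClifford (μ + 1) z).mul_left z).congr_fun fun m => by ring

theorem besselClifford_recurrence :
    besselClifford μ z =
      (μ + 1) * besselClifford (μ + 1) z + z * besselClifford (μ + 1 + 1) z := by
  refine (hasSum_besselClifford μ z).unique ?_
  refine (((hasSum_besselClifford (μ + 1) z).mul_left (μ + 1)).add
    (hasSum_mul_besselCliffordCoeff (μ + 1) z)).congr_fun fun m => ?_
  rw [besselCliffordCoeff_eq_mul]
  ring

theorem besselClifford_zero : besselClifford μ 0 = (Gamma (μ + 1))⁻¹ := by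
  rw [besselClifford, tsum_eq_single 0 fun m hm => by simp [hm]]
  simp [besselCliffordCoeff]

theorem besselClifford_wronskian :
    μ * (besselClifford μ z * besselClifford (-μ) z) +
        z * (besselClifford (μ + 1) z * besselClifford (-μ) z -
          besselClifford μ z * besselClifford (-μ + 1) z) =
      sin (π * μ) / π := by
  let W (w : ℝ) : ℝ := μ * (besselClifford μ w * besselClifford (-μ) w) +
    w * (besselClifford (μ + 1) w * besselClifford (-μ) w -
      besselClifford μ w * besselClifford (-μ + 1) w)
  have hW (w : ℝ) : HasDerivAt W 0 w := by
    have hpos := hasDerivAt_besselClifford μ w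
    have hneg := hasDerivAt_besselClifford (-μ) w
    have hpos_succ := hasDerivAt_besselClifford (μ + 1) w
    have hneg_succ := hasDerivAt_besselClifford (-μ + 1) w
    refine (((hpos.mul hneg).const_mul μ).add ((hasDerivAt_id w).mul
      ((hpos_succ.mul hneg).sub (hpos.mul hneg_succ)))).congr_deriv ?_
    simp only [Pi.mul_apply, Pi.sub_apply, id]
    linear_combination besselClifford μ w * besselClifford_recurrence (-μ) w -
      besselClifford (-μ) w * besselClifford_recurrence μ w
  calc W z = W 0 := is_const_of_deriv_eq_zero (fun w => (hW w).differentiableAt)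
        (fun w => (hW w).deriv) z 0
    _ = μ * ((Gamma (μ + 1))⁻¹ * (Gamma (-μ + 1))⁻¹) := by simp [W, besselClifford_zero]
    _ = sin (π * μ) / π := mul_inv_Gamma_mul_inv_Gamma_neg μ

end BesselClifford

section BesselJ

variable (μ : ℝ) {x : ℝ}

theorem besselJ_eq_rpow_mul_besselClifford (hx : 0 < x) :
    besselJ μ x = (x / 2) ^ μ * besselClifford μ (-(x / 2) ^ 2) := by
  have hx2 : 0 < x / 2 := by positivity
  rw [besselJ, besselClifford, ← tsum_mul_left]
  refine tsum_congr fun m => ?_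
  have hpow : (x / 2) ^ (2 * (m : ℝ) + μ) = (x / 2) ^ μ * ((x / 2) ^ 2) ^ m := by
    rw [rpow_add hx2, mul_comm, ← pow_mul]
    norm_cast
  rw [hpow, besselCliffordCoeff, neg_pow ((x / 2) ^ 2)]
  ring

theorem hasDerivAt_besselJ (hx : 0 < x) :
    HasDerivAt (besselJ μ) (μ / x * besselJ μ x - besselJ (μ + 1) x) x := by
  have hx2 : x / 2 ≠ 0 := by positivity
  have hhalf : HasDerivAt (fun t : ℝ => t / 2) (1 / 2) x := (hasDerivAt_id x).div_const 2
  have hrpow := hhalf.rpow_const (p := μ) (Or.inl hx2)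
  have hC := (hasDerivAt_besselClifford μ (-(x / 2) ^ 2)).comp x (hhalf.pow 2).neg
  have heq : besselJ μ =ᶠ[nhds x] fun t => (t / 2) ^ μ * besselClifford μ (-(t / 2) ^ 2) := by
    filter_upwards [lt_mem_nhds hx] with t ht using besselJ_eq_rpow_mul_besselClifford μ ht
  refine ((hrpow.mul hC).congr_of_eventuallyEq heq).congr_deriv ?_
  rw [besselJ_eq_rpow_mul_besselClifford μ hx, besselJ_eq_rpow_mul_besselClifford (μ + 1) hx,
    rpow_add_one hx2, rpow_sub_one hx2]
  simp only [Function.comp_apply, Pi.neg_apply, Pi.pow_apply, Nat.cast_ofNat, Nat.add_one_sub_one,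
    pow_one]
  field_simp
  ring

theorem besselJ_wronskian (hx : 0 < x) :
    besselJ μ x * (-μ / x * besselJ (-μ) x - besselJ (-μ + 1) x) -
        (μ / x * besselJ μ x - besselJ (μ + 1) x) * besselJ (-μ) x =
      -(2 * sin (π * μ)) / (π * x) := by
  have hx2 : 0 < x / 2 := by positivity
  have hpow : (x / 2) ^ μ ≠ 0 := (rpow_pos_of_pos hx2 μ).ne'
  have hW := besselClifford_wronskian μ (-(x / 2) ^ 2)
  simp only [besselJ_eq_rpow_mul_besselClifford _ hx, rpow_add_one hx2.ne', rpow_neg hx2.le]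
  rw [show -(2 * sin (π * μ)) / (π * x) = -(2 / x) * (sin (π * μ) / π) by field_simp, ← hW]
  field_simp
  ring

end BesselJ

theorem sin_pi_mul_nonpos_of_mem_Icc {ν : ℝ} (k : ℤ) (hν : ν ∈ Icc (2 * k - 1 : ℝ) (2 * k)) :
    sin (π * ν) ≤ 0 := by
  have hpi := pi_pos
  rw [← sin_sub_int_mul_two_pi (π * ν) k]
  apply sin_nonpos_of_nonpos_of_neg_pi_le <;> nlinarith [hν.1, hν.2]

theorem besselJ_combination_nonneg_general {ν x y : ℝ} (hν : sin (π * ν) ≤ 0) (hx : 0 < x)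
    (hxy : x ≤ y) (hzero : ∀ t ∈ Icc x y, besselJ ν t ≠ 0) :
    0 ≤ besselJ (-ν) y * besselJ ν x - besselJ ν y * besselJ (-ν) x := by
  have pos_of_mem {t : ℝ} (ht : t ∈ Icc x y) : 0 < t := hx.trans_le ht.1
  have cross_le : besselJ ν y * besselJ (-ν) x ≤ besselJ ν x * besselJ (-ν) y := by
    refine mul_le_mul_of_wronskian_nonneg hxy
      (fun t ht => hasDerivAt_besselJ ν (pos_of_mem ht))
      (fun t ht => hasDerivAt_besselJ (-ν) (pos_of_mem ht)) hzero fun t ht => ?_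
    have ht0 := pos_of_mem ht
    rw [besselJ_wronskian ν ht0]
    exact div_nonneg (by linarith) (by positivity)
  linarith

/-- **Lemma 3.1 (well-ordered case).** For `α ∈ (4n−3, 4n−1)`, `ν = (1−α)/2` and
`0 < λ < j²_{ν,1}`, one has
`r^ν·(J_{−ν}(s√λ)·J_ν(r√λ) − J_ν(s√λ)·J_{−ν}(r√λ)) ≥ 0` for `0 < r ≤ s ≤ 1`. -/
theorem besselJ_combination_nonneg (n : ℕ) (hn : 1 ≤ n) (α lam ν : ℝ)
    (hα1 : 4 * (n : ℝ) - 3 < α) (hα2 : α < 4 * (n : ℝ) - 1)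
    (hν : ν = (1 - α) / 2)
    (hlam : 0 < lam)
    (hzero : ∀ t : ℝ, 0 < t → t ≤ Real.sqrt lam → besselJ ν t ≠ 0) :
    ∀ r s : ℝ, 0 < r → r ≤ s → s ≤ 1 →
      0 ≤ r ^ ν * (besselJ (-ν) (s * Real.sqrt lam) * besselJ ν (r * Real.sqrt lam)
        - besselJ ν (s * Real.sqrt lam) * besselJ (-ν) (r * Real.sqrt lam)) := by
  intro r s hr hrs hs
  have hsqrt : 0 < √lam := Real.sqrt_pos.2 hlam
  have hsin : sin (π * ν) ≤ 0 :=
    sin_pi_mul_nonpos_of_mem_Icc (1 - n) ⟨by push_cast; linarith, by push_cast; linarith⟩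
  refine mul_nonneg (rpow_nonneg hr.le ν)
    (besselJ_combination_nonneg_general hsin (by positivity) (by gcongr) fun t ht => ?_)
  exact hzero t (ht.1.trans_lt' (by positivity)) (ht.2.trans (mul_le_of_le_one_left hsqrt.le hs))
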